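/- arXiv:1212.3931 — 2 statements merged into one kernel-verified Lean document; each statement's English description precedes it below -/
import Mathlib

section
/- Let γ : ℝⁿ → ℝⁿ be bounded and measurable, and assume γ is weakly divergence free: ∫_{ℝⁿ} γ(x)·∇ψ(x) dx = 0 for every smooth compactly supported ψ : ℝⁿ → ℂ. Then for all smooth compactly supported u, φ : ℝ^{1+n} → ℂ (coordinates (t, x) ∈ ℝ × ℝⁿ), ∫∫_{ℝ^{1+n}} [ (γ(x)·∇_x u(t,x)) conj(∂_t φ(t,x)) − ∂_t u(t,x) (γ(x)·conj(∇_x φ(t,x))) ] dt dx = 0. In other words, the sesquilinear form associated to the coefficient matrix M_γ = [[0, γᵗ], [−γ, 0]] vanishes identically, so L is unchanged by adding M_γ to its coefficients. -/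
open MeasureTheory

/-!
The mixed second derivatives of `φ` cancel in
`B (∂_v u) (∂_w φ) - B (∂_w u) (∂_v φ) = ∂_v (B u (∂_w φ)) - ∂_w (B u (∂_v φ))`,
where `B` is `ℝ`-bilinear. Take `v = (0, γ x)` and `w = (1, 0)`. On every slice `{t} × E` the first
term on the right is the derivative of a test function along `γ`, so its integral vanishes because
`γ` is weakly divergence free. On every line `ℝ × {x}` the vector `γ x` is constant, so the second
term is the `t`-derivative of a compactly supported function. The sesquilinear form is the case
`B z w = z * conj w`.
-/

open scoped ContDiff

section LocallyIntegrable

variable {E F : Type*} [NormedAddCommGroup E] [NormedAddCommGroup F]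

lemma locallyIntegrable_comp_snd {X Y : Type*} [TopologicalSpace X] [MeasurableSpace X]
    [TopologicalSpace Y] [MeasurableSpace Y] {ν : Measure X} [SFinite ν]
    [IsLocallyFiniteMeasure ν] {μ : Measure Y} [SFinite μ] {f : Y → E}
    (hf : LocallyIntegrable f μ) : LocallyIntegrable (fun p : X × Y => f p.2) (ν.prod μ) := by
  rintro ⟨x, y⟩
  obtain ⟨s, hs, hνs⟩ := ν.finiteAt_nhds x
  obtain ⟨t, ht, hft⟩ := hf y
  have : IsFiniteMeasure (ν.restrict s) := isFiniteMeasure_restrict.2 hνs.ne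
  refine ⟨s ×ˢ t, prod_mem_nhds hs ht, ?_⟩
  rw [IntegrableOn, ← Measure.prod_restrict]
  exact Integrable.comp_snd hft _

lemma locallyIntegrable_zero_prodMk [NormedSpace ℝ E] [NormedSpace ℝ F] {X : Type*}
    [TopologicalSpace X] [MeasurableSpace X] {μ : Measure X} {f : X → E}
    (hf : LocallyIntegrable f μ) : LocallyIntegrable (fun x => ((0 : F), f x)) μ := fun x =>
  let ⟨s, hs, hfs⟩ := hf x
  ⟨s, hs, (ContinuousLinearMap.inr ℝ F E).integrable_comp hfs⟩

lemma integrable_clm_apply_of_hasCompactSupport [NormedSpace ℝ E] [NormedSpace ℝ F]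
    {X : Type*} [TopologicalSpace X] [T2Space X] [SecondCountableTopology X] [MeasurableSpace X]
    [OpensMeasurableSpace X] {μ : Measure X} {g : X → E} (hg : LocallyIntegrable g μ)
    {L : X → E →L[ℝ] F} (hL : Continuous L) (hLsupp : HasCompactSupport L) :
    Integrable (fun x => L x (g x)) μ := by
  have hbound : Integrable (fun x => ‖L x‖ • g x) μ :=
    hg.integrable_smul_left_of_hasCompactSupport hL.norm hLsupp.norm
  refine hbound.mono ?_ (.of_forall fun x => ?_)
  · exact (ContinuousLinearMap.id ℝ (E →L[ℝ] F)).aestronglyMeasurable_comp₂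
      hL.aestronglyMeasurable hg.aestronglyMeasurable
  · simpa [norm_smul] using (L x).le_opNorm (g x)

end LocallyIntegrable

section Slices

variable {T E F : Type*} [NormedAddCommGroup T] [NormedSpace ℝ T] [NormedAddCommGroup E]
  [NormedSpace ℝ E] [NormedAddCommGroup F] [NormedSpace ℝ F]

lemma hasCompactSupport_comp_prodMk_left {X Y M : Type*} [TopologicalSpace X] [T2Space X]
    [TopologicalSpace Y] [T2Space Y] [Zero M] {f : X × Y → M} (hf : HasCompactSupport f) (x : X) :
    HasCompactSupport fun y => f (x, y) :=
  hf.comp_isClosedEmbedding <| Function.LeftInverse.isClosedEmbedding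
    (f := Prod.snd) (fun _ => rfl) continuous_snd (by fun_prop)

lemma hasCompactSupport_comp_prodMk_right {X Y M : Type*} [TopologicalSpace X] [T2Space X]
    [TopologicalSpace Y] [T2Space Y] [Zero M] {f : X × Y → M} (hf : HasCompactSupport f) (y : Y) :
    HasCompactSupport fun x => f (x, y) :=
  hf.comp_isClosedEmbedding <| Function.LeftInverse.isClosedEmbedding
    (f := Prod.fst) (fun _ => rfl) continuous_fst (by fun_prop)

lemma fderiv_comp_prodMk_left_apply {w : T × E → F} {t : T} {x : E}
    (hw : DifferentiableAt ℝ w (t, x)) (v : E) :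
    fderiv ℝ (fun y => w (t, y)) x v = fderiv ℝ w (t, x) (0, v) := by
  have h := hw.hasFDerivAt.comp x (hasFDerivAt_prodMk_right t x)
  rw [Function.comp_def] at h
  simp [h.fderiv]

lemma integral_fderiv_fst_eq_zero {w : ℝ × E → F} (hw : ContDiff ℝ 1 w)
    (hwsupp : HasCompactSupport w) (x : E) : ∫ t, fderiv ℝ w (t, x) (1, 0) = 0 := by
  have hderiv (t : ℝ) : HasDerivAt (fun s => w (s, x)) (fderiv ℝ w (t, x) (1, 0)) t := by
    have h := (hw.differentiable one_ne_zero (t, x)).hasFDerivAt.comp t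
      (hasFDerivAt_prodMk_left (𝕜 := ℝ) t x)
    simpa [Function.comp_def] using h.hasDerivAt
  have hcont : Continuous fun t => fderiv ℝ w (t, x) (1, 0) :=
    ((hw.continuous_fderiv one_ne_zero).comp (by fun_prop)).clm_apply continuous_const
  exact integral_eq_zero_of_hasDerivAt_of_integrable hderiv
    (hcont.integrable_of_hasCompactSupport
      (hasCompactSupport_comp_prodMk_right (hwsupp.fderiv_apply ℝ (1, 0)) x))
    ((hw.continuous.comp (by fun_prop)).integrable_of_hasCompactSupport
      (hasCompactSupport_comp_prodMk_right hwsupp x))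

end Slices

section Bilinear

variable {F₁ F₂ G : Type*} [NormedAddCommGroup F₁] [NormedSpace ℝ F₁] [NormedAddCommGroup F₂]
  [NormedSpace ℝ F₂] [NormedAddCommGroup G] [NormedSpace ℝ G]

lemma hasCompactSupport_bilinear_left {X : Type*} [TopologicalSpace X]
    (B : F₁ →L[ℝ] F₂ →L[ℝ] G) {f : X → F₁} (hf : HasCompactSupport f) (g : X → F₂) :
    HasCompactSupport fun x => B (f x) (g x) :=
  hf.mono fun x => mt fun hx => by simp only [hx, map_zero, zero_apply]

lemma fderiv_bilinear_fderiv_sub {P : Type*} [NormedAddCommGroup P] [NormedSpace ℝ P]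
    (B : F₁ →L[ℝ] F₂ →L[ℝ] G) {u : P → F₁} {ψ : P → F₂} {p : P} (hu : DifferentiableAt ℝ u p)
    (hψ : ContDiffAt ℝ 2 ψ p) (v w : P) :
    fderiv ℝ (fun q => B (u q) (fderiv ℝ ψ q w)) p v -
        fderiv ℝ (fun q => B.precompR P (u q) (fderiv ℝ ψ q)) p w v =
      B (fderiv ℝ u p v) (fderiv ℝ ψ p w) - B (fderiv ℝ u p w) (fderiv ℝ ψ p v) := by
  have hdψ : DifferentiableAt ℝ (fderiv ℝ ψ) p :=
    (hψ.fderiv_right (m := 1) (by norm_num)).differentiableAt one_ne_zero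
  have hsymm : fderiv ℝ (fderiv ℝ ψ) p v w = fderiv ℝ (fderiv ℝ ψ) p w v :=
    hψ.isSymmSndFDerivAt (by rw [minSmoothness_of_isRCLikeNormedField]) v w
  rw [B.fderiv_of_bilinear hu (hdψ.clm_apply (differentiableAt_const w)),
    (B.precompR P).fderiv_of_bilinear hu hdψ, fderiv_clm_apply hdψ (differentiableAt_const w)]
  simp [hsymm]

end Bilinear

section Integrals

variable {E F G : Type*} [NormedAddCommGroup E] [NormedSpace ℝ E] [SecondCountableTopology E]
  [MeasurableSpace E] [OpensMeasurableSpace E] {μ : Measure E} [SFinite μ] [NormedAddCommGroup F]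
  [NormedSpace ℝ F] [NormedAddCommGroup G] [NormedSpace ℝ G]

lemma integrable_fderiv_fst_clm_apply {V : E → G} (hV : LocallyIntegrable V μ)
    {Λ : ℝ × E → G →L[ℝ] F} (hΛ : ContDiff ℝ 1 Λ) (hΛsupp : HasCompactSupport Λ) :
    Integrable (fun p => fderiv ℝ Λ p (1, 0) (V p.2)) (volume.prod μ) :=
  integrable_clm_apply_of_hasCompactSupport (locallyIntegrable_comp_snd hV)
    ((hΛ.continuous_fderiv one_ne_zero).clm_apply continuous_const) (hΛsupp.fderiv_apply ℝ (1, 0))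

lemma integral_fderiv_fst_clm_apply_eq_zero {V : E → G} (hV : LocallyIntegrable V μ)
    {Λ : ℝ × E → G →L[ℝ] F} (hΛ : ContDiff ℝ 1 Λ) (hΛsupp : HasCompactSupport Λ) :
    ∫ p, fderiv ℝ Λ p (1, 0) (V p.2) ∂(volume.prod μ) = 0 := by
  rw [integral_prod_symm _ (integrable_fderiv_fst_clm_apply hV hΛ hΛsupp)]
  refine integral_eq_zero_of_ae (.of_forall fun x => ?_)
  have hΛint : Integrable fun t : ℝ => fderiv ℝ Λ (t, x) (1, 0) :=
    (((hΛ.continuous_fderiv one_ne_zero).comp (by fun_prop)).clm_apply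
      continuous_const).integrable_of_hasCompactSupport
      (hasCompactSupport_comp_prodMk_right (hΛsupp.fderiv_apply ℝ (1, 0)) x)
  calc ∫ t, fderiv ℝ Λ (t, x) (1, 0) (V x)
      = (∫ t, fderiv ℝ Λ (t, x) (1, 0)) (V x) := (ContinuousLinearMap.integral_apply hΛint _).symm
    _ = 0 := by rw [integral_fderiv_fst_eq_zero hΛ hΛsupp, zero_apply]

end Integrals

/-- A vector field `γ` on `E` is weakly divergence free with respect to `μ` if `∫ γ · ∇ψ dμ = 0` for
all smooth compactly supported `ψ : E → F`; here `γ · ∇ψ` is the derivative of `ψ` along `γ`. -/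
def IsWeaklyDivFree {E : Type*} (F : Type*) [NormedAddCommGroup E] [NormedSpace ℝ E]
    [MeasurableSpace E] [NormedAddCommGroup F] [NormedSpace ℝ F] (γ : E → E) (μ : Measure E) :
    Prop :=
  ∀ ψ : E → F, ContDiff ℝ ∞ ψ → HasCompactSupport ψ → ∫ x, fderiv ℝ ψ x (γ x) ∂μ = 0

section WeaklyDivFree

variable {E : Type*} [NormedAddCommGroup E] [NormedSpace ℝ E] [SecondCountableTopology E]
  [MeasurableSpace E] [OpensMeasurableSpace E] {μ : Measure E} [SFinite μ] {γ : E → E}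

section Product

variable {T F : Type*} [NormedAddCommGroup T] [NormedSpace ℝ T] [SecondCountableTopology T]
  [MeasurableSpace T] [OpensMeasurableSpace T] {ν : Measure T} [SFinite ν]
  [IsLocallyFiniteMeasure ν] [NormedAddCommGroup F] [NormedSpace ℝ F]

lemma integrable_fderiv_snd_apply (hγ : LocallyIntegrable γ μ) {w : T × E → F}
    (hw : ContDiff ℝ 1 w) (hwsupp : HasCompactSupport w) :
    Integrable (fun p => fderiv ℝ w p (0, γ p.2)) (ν.prod μ) :=
  integrable_clm_apply_of_hasCompactSupport
    (locallyIntegrable_comp_snd (locallyIntegrable_zero_prodMk hγ))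
    (hw.continuous_fderiv one_ne_zero) (hwsupp.fderiv ℝ)

lemma IsWeaklyDivFree.integral_fderiv_snd_eq_zero (hdiv : IsWeaklyDivFree F γ μ)
    (hγ : LocallyIntegrable γ μ) {w : T × E → F} (hw : ContDiff ℝ ∞ w)
    (hwsupp : HasCompactSupport w) : ∫ p, fderiv ℝ w p (0, γ p.2) ∂(ν.prod μ) = 0 := by
  rw [integral_prod _ (integrable_fderiv_snd_apply hγ (hw.of_le (by simp)) hwsupp)]
  refine integral_eq_zero_of_ae (.of_forall fun t => ?_)
  calc ∫ x, fderiv ℝ w (t, x) (0, γ x) ∂μ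
      = ∫ x, fderiv ℝ (fun y => w (t, y)) x (γ x) ∂μ := by
        simp only [fderiv_comp_prodMk_left_apply (hw.differentiable (by simp) _)]
    _ = 0 := hdiv _ (hw.comp (by fun_prop)) (hasCompactSupport_comp_prodMk_left hwsupp t)

end Product

variable {F₁ F₂ G : Type*} [NormedAddCommGroup F₁] [NormedSpace ℝ F₁] [NormedAddCommGroup F₂]
  [NormedSpace ℝ F₂] [NormedAddCommGroup G] [NormedSpace ℝ G]

theorem stmt10_general (B : F₁ →L[ℝ] F₂ →L[ℝ] G) (hγ : LocallyIntegrable γ μ)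
    (hdiv : IsWeaklyDivFree G γ μ) {u : ℝ × E → F₁} {φ : ℝ × E → F₂} (hu : ContDiff ℝ ∞ u)
    (husupp : HasCompactSupport u) (hφ : ContDiff ℝ ∞ φ) :
    ∫ p, (B (fderiv ℝ u p (0, γ p.2)) (fderiv ℝ φ p (1, 0)) -
      B (fderiv ℝ u p (1, 0)) (fderiv ℝ φ p (0, γ p.2))) ∂(volume.prod μ) = 0 := by
  let w : ℝ × E → G := fun q => B (u q) (fderiv ℝ φ q (1, 0))
  let Λ : ℝ × E → ℝ × E →L[ℝ] G := fun q => B.precompR (ℝ × E) (u q) (fderiv ℝ φ q)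
  have hdφ : ContDiff ℝ ∞ (fderiv ℝ φ) := hφ.fderiv_right le_rfl
  have hw : ContDiff ℝ ∞ w := (B.contDiff.comp hu).clm_apply (hdφ.clm_apply contDiff_const)
  have hΛ : ContDiff ℝ 1 Λ :=
    (((B.precompR (ℝ × E)).contDiff.comp hu).clm_apply hdφ).of_le (by simp)
  have hwsupp : HasCompactSupport w := hasCompactSupport_bilinear_left B husupp _
  have hΛsupp : HasCompactSupport Λ := hasCompactSupport_bilinear_left _ husupp _
  have hV : LocallyIntegrable (fun x => ((0 : ℝ), γ x)) μ := locallyIntegrable_zero_prodMk hγ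
  have hsplit (p : ℝ × E) : B (fderiv ℝ u p (0, γ p.2)) (fderiv ℝ φ p (1, 0)) -
      B (fderiv ℝ u p (1, 0)) (fderiv ℝ φ p (0, γ p.2)) =
        fderiv ℝ w p (0, γ p.2) - fderiv ℝ Λ p (1, 0) (0, γ p.2) :=
    (fderiv_bilinear_fderiv_sub B (hu.differentiable (by simp) p)
      (contDiff_infty.1 hφ 2).contDiffAt _ _).symm
  simp only [hsplit]
  rw [integral_sub (integrable_fderiv_snd_apply hγ (hw.of_le (by simp)) hwsupp)
    (integrable_fderiv_fst_clm_apply hV hΛ hΛsupp),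
    hdiv.integral_fderiv_snd_eq_zero hγ hw hwsupp,
    integral_fderiv_fst_clm_apply_eq_zero hV hΛ hΛsupp, sub_zero]

end WeaklyDivFree

section Coordinates

variable {𝕜 ι : Type*} [RCLike 𝕜] [Fintype ι] [DecidableEq ι]

lemma clm_pi_apply_eq_sum (L : (ι → ℝ) →L[ℝ] 𝕜) (v : ι → ℝ) :
    L v = ∑ j, (v j : 𝕜) * L (Pi.single j 1) := by
  conv_lhs => rw [pi_eq_sum_univ' v]
  simp only [map_sum, map_smul, RCLike.real_smul_eq_coe_mul]

lemma clm_prod_pi_apply_eq_sum {T : Type*} [NormedAddCommGroup T] [NormedSpace ℝ T]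
    (L : T × (ι → ℝ) →L[ℝ] 𝕜) (v : ι → ℝ) :
    L (0, v) = ∑ j, (v j : 𝕜) * L (0, Pi.single j 1) :=
  clm_pi_apply_eq_sum (L ∘L ContinuousLinearMap.inr ℝ T (ι → ℝ)) v

end Coordinates

/- STATEMENT 10: if `γ : ℝⁿ → ℝⁿ` is bounded, measurable and weakly
divergence free (`∫ γ·∇ψ = 0` for all smooth compactly supported `ψ`),
then for all smooth compactly supported `u, φ : ℝ^{1+n} → ℂ` the
sesquilinear form of the coefficient matrix `M_γ = [[0, γᵗ], [-γ, 0]]`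
vanishes:
`∫∫ (γ·∇ₓu) conj(∂ₜφ) - ∂ₜu (γ·conj(∇ₓφ)) = 0`.
Points of `ℝ^{1+n}` are `p = (t, x) ∈ ℝ × ℝⁿ`; `∂ₜu(p) = Du(p)(1,0)` and
`(∇ₓu(p))_j = Du(p)(0, eⱼ)`. -/
theorem stmt10 {n : ℕ} (γ : (Fin n → ℝ) → (Fin n → ℝ))
    (hγmeas : Measurable γ) (Cγ : ℝ) (hγbdd : ∀ x, ‖γ x‖ ≤ Cγ)
    (hdiv : ∀ ψ : (Fin n → ℝ) → ℂ, ContDiff ℝ (⊤ : ℕ∞) ψ → HasCompactSupport ψ →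
      ∫ x : Fin n → ℝ, ∑ j, (γ x j : ℂ) * fderiv ℝ ψ x (Pi.single j 1) = 0)
    (u φ : ℝ × (Fin n → ℝ) → ℂ)
    (hu : ContDiff ℝ (⊤ : ℕ∞) u) (husupp : HasCompactSupport u)
    (hφ : ContDiff ℝ (⊤ : ℕ∞) φ) (hφsupp : HasCompactSupport φ) :
    ∫ p : ℝ × (Fin n → ℝ),
      ((∑ j, (γ p.2 j : ℂ) * fderiv ℝ u p (0, Pi.single j 1)) *
          (starRingEnd ℂ) (fderiv ℝ φ p (1, 0)) -
        fderiv ℝ u p (1, 0) *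
          (∑ j, (γ p.2 j : ℂ) * (starRingEnd ℂ) (fderiv ℝ φ p (0, Pi.single j 1)))) = 0 := by
  have hγ : LocallyIntegrable γ :=
    (memLp_top_of_bound hγmeas.aestronglyMeasurable Cγ (.of_forall hγbdd)).locallyIntegrable le_top
  have hdivFree : IsWeaklyDivFree ℂ γ volume := fun ψ hψ hψsupp =>
    (integral_congr_ae (.of_forall fun x => clm_pi_apply_eq_sum _ _)).trans (hdiv ψ hψ hψsupp)
  let B : ℂ →L[ℝ] ℂ →L[ℝ] ℂ :=
    (ContinuousLinearMap.mul ℝ ℂ).bilinearComp (.id ℝ ℂ) (Complex.conjCLE : ℂ →L[ℝ] ℂ)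
  simpa [B, clm_prod_pi_apply_eq_sum _ (γ _), Measure.volume_eq_prod, Finset.sum_mul,
    Finset.mul_sum] using stmt10_general B hγ hdivFree hu husupp hφ
end

section
/- There exists a constant C > 0, depending only on n, such that for every Schwartz function f : ℝⁿ → ℂ there exists a function u : [0, ∞) × ℝⁿ → ℂ, continuous on [0, ∞) × ℝⁿ and smooth on (0, ∞) × ℝⁿ, with u(0, x) = f(x) for all x ∈ ℝⁿ and ∫_0^∞ ∫_{ℝⁿ} |∇_{t,x} u(t,x)|² dx dt ≤ C ∫_{ℝⁿ} ‖ξ‖ |f̂(ξ)|² dξ. In other words, the trace map from Ḣ¹(ℝ^{1+n}_+) to Ḣ^{1/2}(ℝⁿ) is onto. -/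
open MeasureTheory
open scoped ENNReal FourierTransform SchwartzMap

/-!
Extend `f` by the Gaussian Fourier multiplier `u(t, ·) = (e^{-2π²t²‖ξ‖²} f̂)^∨`. The symbol is the
characteristic function of a Gaussian, `e^{-2π²t²‖ξ‖²} = 𝔼 e^{2πi s t ‖ξ‖}` with `s` standard
normal, so `u(t, x)` is a superposition of plane waves in `(t, x)` whose frequencies
`(s ‖ξ‖, ξ)` have all moments against `|f̂(ξ)|`: hence `u` is smooth on the whole space, across
`t = 0`. By Plancherel in `x`, the energy at frequency `ξ` is, with `r = 2π‖ξ‖`,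
`∫₀^∞ r² (1 + (r t)²) e^{-(r t)²} dt · |f̂(ξ)|²`, and scaling turns the integral into
`(3/4) √π r = (3/2) π^{3/2} ‖ξ‖`.
-/

section
open scoped Real LineDeriv Topology
open SchwartzMap ProbabilityTheory Set
open Real (exp)

lemma enorm_sq_eq_ofReal_norm_sq {V : Type*} [SeminormedAddGroup V] (v : V) :
    ‖v‖ₑ ^ 2 = ENNReal.ofReal (‖v‖ ^ 2) := by
  rw [ENNReal.ofReal_pow (norm_nonneg _), ofReal_norm]

section FourierMultiplier

variable {E V ι : Type*} [NormedAddCommGroup E] [InnerProductSpace ℝ E]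

lemma hasTemperateGrowth_exp_neg_mul_norm_sq {c : ℝ} (hc : 0 ≤ c) :
    (fun ξ : E ↦ exp (-c * ‖ξ‖ ^ 2)).HasTemperateGrowth := by
  -- `y ↦ exp (-c * y)` has temperate growth only on `[0, ∞)`, the range of `‖ξ‖ ^ 2`.
  refine Function.HasTemperateGrowth.comp' (g := fun y : ℝ ↦ exp (-c * y)) (t := Ici 0) ?_
    (uniqueDiffOn_Ici 0) (by fun_prop) (fun N ↦ ⟨0, (1 + c) ^ N, by positivity, ?_⟩)
    (Function.hasTemperateGrowth_norm_sq E)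
  · rintro _ ⟨ξ, rfl⟩
    exact sq_nonneg ‖ξ‖
  · intro k hk y (hy : 0 ≤ y)
    rw [norm_iteratedFDerivWithin_eq_norm_iteratedDerivWithin,
      iteratedDerivWithin_eq_iteratedDeriv (uniqueDiffOn_Ici 0) (by fun_prop) hy,
      iteratedDeriv_exp_const_mul, norm_mul, norm_pow, norm_neg, Real.norm_of_nonneg hc,
      Real.norm_of_nonneg (Real.exp_nonneg _), pow_zero, mul_one]
    calc c ^ k * exp (-c * y) ≤ (1 + c) ^ k * 1 := by
          gcongr
          · linarith
          · exact Real.exp_le_one_iff.2 (by nlinarith)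
      _ ≤ (1 + c) ^ N := by
          rw [mul_one]
          exact pow_le_pow_right₀ (by linarith) hk

variable [FiniteDimensional ℝ E] [MeasurableSpace E] [BorelSpace E] [NormedAddCommGroup V]

section NormedSpace

variable [NormedSpace ℂ V]

lemma fourierMultiplierCLM_apply_eq_integral {m : E → ℝ} (hm : m.HasTemperateGrowth)
    (f : 𝓢(E, V)) (x : E) :
    fourierMultiplierCLM V m f x = ∫ ξ, 𝐞 (inner ℝ ξ x) • m ξ • 𝓕 f ξ := by
  rw [fourierMultiplierCLM_apply, fourierInv_coe, Real.fourierInv_eq]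
  simp only [smulLeftCLM_apply_apply hm]

lemma hasDerivAt_fourierMultiplierCLM_apply {m m' : ℝ → E → ℝ} {bound : E → ℝ} {f : 𝓢(E, V)}
    {s : Set ℝ} {t : ℝ} (hs : s ∈ 𝓝 t) (hm : ∀ r, (m r).HasTemperateGrowth)
    (hm' : (m' t).HasTemperateGrowth)
    (hderiv : ∀ ξ, ∀ r ∈ s, HasDerivAt (m · ξ) (m' r ξ) r)
    (hbound : ∀ ξ, ∀ r ∈ s, ‖m' r ξ‖ ≤ bound ξ)
    (hint : Integrable fun ξ ↦ bound ξ * ‖𝓕 f ξ‖) (x : E) :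
    HasDerivAt (fun r ↦ fourierMultiplierCLM V (m r) f x)
      (fourierMultiplierCLM V (m' t) f x) t := by
  have hcont {g : E → ℝ} (hg : g.HasTemperateGrowth) :
      Continuous fun ξ ↦ 𝐞 (inner ℝ ξ x) • g ξ • 𝓕 f ξ := by
    have := Real.continuous_fourierChar
    have := hg.1.continuous
    have := (𝓕 f).continuous
    fun_prop
  have hint0 : Integrable fun ξ ↦ 𝐞 (inner ℝ ξ x) • m t ξ • 𝓕 f ξ := by
    refine (smulLeftCLM V (m t) (𝓕 f)).integrable.mono (hcont (hm t)).aestronglyMeasurable ?_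
    refine ae_of_all _ fun ξ ↦ ?_
    rw [Circle.norm_smul, smulLeftCLM_apply_apply (hm t)]
  simp only [fourierMultiplierCLM_apply_eq_integral, hm, hm']
  refine (hasDerivAt_integral_of_dominated_loc_of_deriv_le (bound := fun ξ ↦ bound ξ * ‖𝓕 f ξ‖)
    (F' := fun r ξ ↦ 𝐞 (inner ℝ ξ x) • m' r ξ • 𝓕 f ξ) hs
    (.of_forall fun r ↦ (hcont (hm r)).aestronglyMeasurable) hint0
    (hcont hm').aestronglyMeasurable (ae_of_all _ fun ξ r hr ↦ ?_) hint
    (ae_of_all _ fun ξ r hr ↦ ?_)).2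
  · rw [Circle.norm_smul, norm_smul]
    gcongr
    exact hbound ξ r hr
  · exact ((hderiv ξ r hr).smul_const _).const_smul (𝐞 (inner ℝ ξ x) : ℂ)

lemma fourier_fourierMultiplierCLM_apply [CompleteSpace V] {m : E → ℝ} (hm : m.HasTemperateGrowth)
    (f : 𝓢(E, V)) (ξ : E) : 𝓕 (fourierMultiplierCLM V m f) ξ = m ξ • 𝓕 f ξ := by
  rw [fourierMultiplierCLM_apply, FourierTransform.fourier_fourierInv_eq,
    smulLeftCLM_apply_apply hm]

lemma sum_enorm_sq_fourier_lineDeriv [Fintype ι] (b : OrthonormalBasis ι ℝ E) (f : 𝓢(E, V))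
    (ξ : E) :
    ∑ j, ‖𝓕 (∂_{b j} f) ξ‖ₑ ^ 2 = ENNReal.ofReal ((2 * π * ‖ξ‖) ^ 2) * ‖𝓕 f ξ‖ₑ ^ 2 := by
  have enorm_sq_apply (j : ι) : ‖𝓕 (∂_{b j} f) ξ‖ₑ ^ 2 =
      ENNReal.ofReal ((2 * π) ^ 2 * inner ℝ ξ (b j) ^ 2) * ‖𝓕 f ξ‖ₑ ^ 2 := by
    have hnorm : ‖(2 * π * Complex.I : ℂ)‖ = 2 * π := by simp [abs_of_pos Real.pi_pos]
    rw [fourier_lineDerivOp_eq, smul_apply, smulLeftCLM_apply_apply (by fun_prop), enorm_smul,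
      enorm_smul, mul_pow, mul_pow, enorm_sq_eq_ofReal_norm_sq (2 * π * Complex.I : ℂ),
      enorm_sq_eq_ofReal_norm_sq (inner ℝ ξ (b j)), hnorm, Real.norm_eq_abs, sq_abs, ← mul_assoc,
      ← ENNReal.ofReal_mul (by positivity)]
  simp only [enorm_sq_apply]
  rw [← Finset.sum_mul, ← ENNReal.ofReal_sum_of_nonneg fun _ _ ↦ by positivity, ← Finset.mul_sum,
    b.sum_sq_inner_left, ← mul_pow]

end NormedSpace

variable [InnerProductSpace ℂ V] [CompleteSpace V]

lemma lintegral_enorm_sq_fourier (f : 𝓢(E, V)) :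
    ∫⁻ ξ, ‖𝓕 f ξ‖ₑ ^ 2 = ∫⁻ x, ‖f x‖ₑ ^ 2 := by
  have eq_ofReal (g : 𝓢(E, V)) : ∫⁻ x, ‖g x‖ₑ ^ 2 = ENNReal.ofReal (∫ x, ‖g x‖ ^ 2) := by
    rw [ofReal_integral_eq_lintegral_ofReal
      (by simpa using (g.memLp 2).integrable_norm_pow two_ne_zero)
      (ae_of_all _ fun x ↦ by positivity)]
    simp only [enorm_sq_eq_ofReal_norm_sq]
  rw [eq_ofReal, eq_ofReal, integral_norm_sq_fourier]

lemma lintegral_enorm_sq_fourierMultiplierCLM {m : E → ℝ} (hm : m.HasTemperateGrowth)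
    (f : 𝓢(E, V)) :
    ∫⁻ x, ‖fourierMultiplierCLM V m f x‖ₑ ^ 2 = ∫⁻ ξ, ‖m ξ‖ₑ ^ 2 * ‖𝓕 f ξ‖ₑ ^ 2 := by
  rw [← lintegral_enorm_sq_fourier]
  simp only [fourier_fourierMultiplierCLM_apply hm, enorm_smul, mul_pow]

lemma sum_lintegral_enorm_sq_fderiv [Fintype ι] (b : OrthonormalBasis ι ℝ E) (f : 𝓢(E, V)) :
    ∑ j, ∫⁻ x, ‖fderiv ℝ f x (b j)‖ₑ ^ 2 =
      ∫⁻ ξ, ENNReal.ofReal ((2 * π * ‖ξ‖) ^ 2) * ‖𝓕 f ξ‖ₑ ^ 2 := by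
  simp only [← lineDerivOp_apply_eq_fderiv, ← sum_enorm_sq_fourier_lineDeriv b]
  rw [lintegral_finsetSum _ fun j _ ↦ ((𝓕 (∂_{b j} f)).continuous.enorm.measurable).pow_const 2]
  simp only [lintegral_enorm_sq_fourier]

end FourierMultiplier

section Real

lemma integral_Ioi_one_add_sq_mul_exp_neg_sq :
    ∫ s in Ioi (0 : ℝ), (1 + s ^ 2) * exp (-s ^ 2) = 3 / 4 * √π := by
  have hmass : ∫ s in Ioi (0 : ℝ), exp (-s ^ 2) = √π / 2 := by
    simpa using integral_gaussian_Ioi 1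
  have hmoment : ∫ s in Ioi (0 : ℝ), s ^ 2 * exp (-s ^ 2) = √π / 4 := by
    have hGamma : Real.Gamma (3 / 2) = √π / 2 := by
      have h := Real.Gamma_nat_add_half 1
      norm_num at h
      exact h
    have h := integral_rpow_mul_exp_neg_rpow (p := 2) (q := 2) two_pos (by norm_num)
    norm_num [hGamma] at h
    linarith
  simp_rw [add_mul, one_mul]
  rw [integral_add, hmass, hmoment]
  · ring
  · simpa using (integrable_exp_neg_mul_sq one_pos).restrict
  · simpa using (integrable_rpow_mul_exp_neg_mul_sq one_pos (s := 2) (by norm_num)).restrict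

lemma lintegral_Ioi_sq_mul_one_add_sq_mul_exp_neg_sq {a : ℝ} (ha : 0 ≤ a) :
    ∫⁻ t in Ioi (0 : ℝ), ENNReal.ofReal (a ^ 2 * ((1 + (a * t) ^ 2) * exp (-(a * t) ^ 2))) =
      ENNReal.ofReal (3 / 4 * √π * a) := by
  obtain rfl | ha := ha.eq_or_lt
  · simp
  have hint : IntegrableOn (fun t : ℝ ↦ (1 + (a * t) ^ 2) * exp (-(a * t) ^ 2)) (Ioi 0) := by
    refine (integrableOn_Ioi_comp_mul_left_iff
      (fun s : ℝ ↦ (1 + s ^ 2) * exp (-s ^ 2)) 0 ha).2 ?_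
    refine (Integrable.of_integral_ne_zero ?_)
    rw [mul_zero, integral_Ioi_one_add_sq_mul_exp_neg_sq]
    positivity
  rw [← ofReal_integral_eq_lintegral_ofReal (hint.const_mul _)
    (ae_of_all _ fun t ↦ by positivity), integral_const_mul,
    integral_comp_mul_left_Ioi (fun s : ℝ ↦ (1 + s ^ 2) * exp (-s ^ 2)) 0 ha, mul_zero,
    integral_Ioi_one_add_sq_mul_exp_neg_sq]
  congr 1
  simp only [smul_eq_mul]
  field_simp

lemma integral_fourierChar_gaussianReal (a : ℝ) :
    ∫ s, (𝐞 (s * a) : ℂ) ∂gaussianReal 0 1 = exp (-(2 * π ^ 2) * a ^ 2) := by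
  have h := charFun_gaussianReal (μ := 0) (v := 1) (2 * π * a)
  rw [charFun_apply_real] at h
  simp only [Real.fourierChar_apply]
  convert h using 1
  · congr with s
    push_cast
    ring_nf
  · push_cast
    congr 1
    ring

lemma integrable_one_add_abs_pow_gaussianReal (k : ℕ) :
    Integrable (fun s : ℝ ↦ (1 + |s|) ^ k) (gaussianReal 0 1) := by
  have h : MemLp (fun s : ℝ ↦ 1 + |s|) k (gaussianReal 0 1) :=
    (memLp_const (1 : ℝ)).add (memLp_id_gaussianReal' k (by simp)).abs
  exact h.integrable_norm_pow'.congr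
    (ae_of_all _ fun s ↦ congrArg (· ^ k) (Real.norm_of_nonneg (by positivity)))

end Real

noncomputable section GaussianExtension

variable {E V H ι : Type*} [NormedAddCommGroup E]

/-- The Fourier symbol of the Gaussian mollification at time `t`, normalized so that
`gaussianSymbol t ξ = 𝔼 e^{2πi s t ‖ξ‖}` for a standard normal variable `s`. -/
def gaussianSymbol (t : ℝ) (ξ : E) : ℝ := exp (-(2 * π ^ 2 * t ^ 2) * ‖ξ‖ ^ 2)

/-- The time derivative of `gaussianSymbol`, as an explicit Fourier symbol. -/
def gaussianSymbolDeriv (t : ℝ) (ξ : E) : ℝ := -(4 * π ^ 2 * t) * ‖ξ‖ ^ 2 * gaussianSymbol t ξ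

lemma gaussianSymbol_le_one (t : ℝ) (ξ : E) : gaussianSymbol t ξ ≤ 1 :=
  Real.exp_le_one_iff.2 (by rw [neg_mul, neg_nonpos]; positivity)

lemma hasDerivAt_gaussianSymbol (t : ℝ) (ξ : E) :
    HasDerivAt (gaussianSymbol · ξ) (gaussianSymbolDeriv t ξ) t := by
  have hexponent : HasDerivAt (fun r : ℝ ↦ -(2 * π ^ 2 * r ^ 2) * ‖ξ‖ ^ 2)
      (-(4 * π ^ 2 * t) * ‖ξ‖ ^ 2) t := by
    refine ((((hasDerivAt_pow 2 t).const_mul (2 * π ^ 2)).neg).mul_const (‖ξ‖ ^ 2)).congr_deriv ?_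
    ring
  exact hexponent.exp.congr_deriv (mul_comm _ _)

lemma norm_gaussianSymbolDeriv_le {t R : ℝ} (ht : |t| ≤ R) (ξ : E) :
    ‖gaussianSymbolDeriv t ξ‖ ≤ 4 * π ^ 2 * R * ‖ξ‖ ^ 2 := by
  have hR : 0 ≤ R := (abs_nonneg t).trans ht
  have hpos : 0 ≤ gaussianSymbol t ξ := Real.exp_nonneg _
  calc ‖gaussianSymbolDeriv t ξ‖ = 4 * π ^ 2 * |t| * ‖ξ‖ ^ 2 * gaussianSymbol t ξ := by
        simp [gaussianSymbolDeriv, abs_of_nonneg hpos]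
    _ ≤ 4 * π ^ 2 * R * ‖ξ‖ ^ 2 * 1 := by
        gcongr
        exact gaussianSymbol_le_one t ξ
    _ = 4 * π ^ 2 * R * ‖ξ‖ ^ 2 := mul_one _

lemma enorm_sq_gaussianSymbolDeriv_add (t : ℝ) (ξ : E) :
    ‖gaussianSymbolDeriv t ξ‖ₑ ^ 2 +
        ENNReal.ofReal ((2 * π * ‖ξ‖) ^ 2) * ‖gaussianSymbol t ξ‖ₑ ^ 2 =
      ENNReal.ofReal ((2 * π * ‖ξ‖) ^ 2 *
        ((1 + (2 * π * ‖ξ‖ * t) ^ 2) * exp (-(2 * π * ‖ξ‖ * t) ^ 2))) := by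
  have hsq : gaussianSymbol t ξ ^ 2 = exp (-(2 * π * ‖ξ‖ * t) ^ 2) := by
    rw [gaussianSymbol, ← Real.exp_nat_mul]
    congr 1
    push_cast
    ring
  simp only [enorm_sq_eq_ofReal_norm_sq, Real.norm_eq_abs, sq_abs]
  rw [← ENNReal.ofReal_mul (by positivity), ← ENNReal.ofReal_add (by positivity) (by positivity),
    gaussianSymbolDeriv, mul_pow, hsq]
  ring_nf

/-- The parametrization `(s, ξ) ↦ (s ‖ξ‖, ξ)` of space-time frequencies `(τ, ξ)` by their speed
`s = τ / ‖ξ‖`; it collapses `ξ = 0` to the origin. -/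
def coneMap (z : ℝ × E) : ℝ × E := (z.1 * ‖z.2‖, z.2)

lemma continuous_coneMap : Continuous (coneMap : ℝ × E → ℝ × E) := by
  unfold coneMap; fun_prop

lemma norm_coneMap_le (z : ℝ × E) : ‖coneMap z‖ ≤ (1 + |z.1|) * ‖z.2‖ := by
  have : 0 ≤ |z.1| * ‖z.2‖ := by positivity
  rw [coneMap, Prod.norm_def, norm_mul, norm_norm, Real.norm_eq_abs, add_mul, one_mul]
  exact max_le (by linarith [norm_nonneg z.2]) (by linarith)

variable [InnerProductSpace ℝ E]

lemma hasTemperateGrowth_gaussianSymbol (t : ℝ) :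
    (gaussianSymbol t : E → ℝ).HasTemperateGrowth :=
  hasTemperateGrowth_exp_neg_mul_norm_sq (by positivity)

lemma hasTemperateGrowth_gaussianSymbolDeriv (t : ℝ) :
    (gaussianSymbolDeriv t : E → ℝ).HasTemperateGrowth := by
  have := hasTemperateGrowth_gaussianSymbol (E := E) t
  unfold gaussianSymbolDeriv
  fun_prop

variable (E) in
/-- The Lorentzian pairing of space-time vectors. The signs are chosen so that the phase
`𝐞 (-minkowskiForm E (τ, ξ) (t, x))` of `VectorFourier.fourierIntegral` has the sign of the
*inverse* Fourier transform in `x`; the sign of the time component is immaterial, since it is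
paired with a symmetric measure. -/
def minkowskiForm : (ℝ × E) →L[ℝ] (ℝ × E) →L[ℝ] ℝ :=
  (innerSL ℝ).bilinearComp (.fst ℝ ℝ E) (.fst ℝ ℝ E) -
    (innerSL ℝ).bilinearComp (.snd ℝ ℝ E) (.snd ℝ ℝ E)

lemma minkowskiForm_apply (v w : ℝ × E) : minkowskiForm E v w = v.1 * w.1 - inner ℝ v.2 w.2 := by
  simp [minkowskiForm, mul_comm]

section NormedSpace

variable [NormedAddCommGroup V] [NormedSpace ℂ V]

lemma integral_fourierChar_minkowskiForm_coneMap [CompleteSpace V] (ξ : E) (p : ℝ × E) (v : V) :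
    ∫ s, 𝐞 (-minkowskiForm E (coneMap (s, ξ)) p) • v ∂gaussianReal 0 1 =
      𝐞 (inner ℝ ξ p.2) • gaussianSymbol p.1 ξ • v := by
  have hchar (s : ℝ) : 𝐞 (-minkowskiForm E (coneMap (s, ξ)) p) • v =
      (𝐞 (s * -(‖ξ‖ * p.1)) : ℂ) • 𝐞 (inner ℝ ξ p.2) • v := by
    rw [← Circle.smul_def, smul_smul, ← AddChar.map_add_eq_mul, minkowskiForm_apply]
    congr 2
    simp only [coneMap]
    ring
  simp only [hchar]
  rw [integral_smul_const, integral_fourierChar_gaussianReal, Complex.coe_smul, smul_comm]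
  congr 2
  rw [gaussianSymbol]
  ring_nf

variable [FiniteDimensional ℝ E] [MeasurableSpace E] [BorelSpace E]

variable (E) in
/-- The frequency measure of the plane-wave decomposition of the Gaussian extension: standard
normal speeds times Lebesgue measure in `ξ`, pushed forward to space-time frequencies. -/
def coneMeasure : Measure (ℝ × E) := ((gaussianReal 0 1).prod volume).map coneMap

lemma integrable_pow_norm_mul_coneMeasure (g : 𝓢(E, V)) (k : ℕ) :
    Integrable (fun v ↦ ‖v‖ ^ k * ‖g v.2‖) (coneMeasure E) := by
  have hg := g.continuous
  rw [coneMeasure, integrable_map_measure (by fun_prop) continuous_coneMap.aemeasurable]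
  refine ((integrable_one_add_abs_pow_gaussianReal k).mul_prod
    (g.integrable_pow_mul volume k)).mono' ?_ (ae_of_all _ fun z ↦ ?_)
  · have := continuous_coneMap (E := E)
    exact Continuous.aestronglyMeasurable (by fun_prop)
  · simp only [Function.comp_apply]
    rw [Real.norm_of_nonneg (by positivity), ← mul_assoc, ← mul_pow]
    gcongr
    · exact norm_coneMap_le z
    · exact le_rfl

/-- The Gaussian extension `(t, x) ↦ (gaussianSymbol t · f̂)^∨ (x)` of `f` to space-time, given at
all times `t : ℝ`; it is even in `t`. -/
def gaussianExtension (f : 𝓢(E, V)) (p : ℝ × E) : V :=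
  fourierMultiplierCLM V (gaussianSymbol p.1) f p.2

lemma gaussianExtension_zero [CompleteSpace V] (f : 𝓢(E, V)) (x : E) :
    gaussianExtension f (0, x) = f x := by
  have hone : gaussianSymbol (0 : ℝ) = fun _ : E ↦ (1 : ℝ) := by
    ext ξ
    simp [gaussianSymbol]
  simp [gaussianExtension, hone]

lemma gaussianExtension_eq_fourierIntegral [CompleteSpace V] (f : 𝓢(E, V)) :
    gaussianExtension f = VectorFourier.fourierIntegral 𝐞 (coneMeasure E)
      (minkowskiForm E).toLinearMap₁₂ (fun v ↦ 𝓕 f v.2) := by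
  ext p
  have hcone := continuous_coneMap (E := E)
  have hwave : Continuous fun v : ℝ × E ↦ 𝐞 (-minkowskiForm E v p) • 𝓕 f v.2 := by
    have := Real.continuous_fourierChar
    have := (𝓕 f).continuous
    fun_prop
  have hint : Integrable (fun z : ℝ × E ↦ 𝐞 (-minkowskiForm E (coneMap z) p) • 𝓕 f z.2)
      ((gaussianReal 0 1).prod volume) := by
    have hsnd : Integrable (fun z : ℝ × E ↦ 𝓕 f z.2) ((gaussianReal 0 1).prod volume) :=
      (𝓕 f).integrable.comp_snd _
    exact hsnd.mono (hwave.comp hcone).aestronglyMeasurable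
      (ae_of_all _ fun z ↦ (Circle.norm_smul _ _).le)
  calc gaussianExtension f p = ∫ ξ, 𝐞 (inner ℝ ξ p.2) • gaussianSymbol p.1 ξ • 𝓕 f ξ :=
        fourierMultiplierCLM_apply_eq_integral (hasTemperateGrowth_gaussianSymbol p.1) f p.2
    _ = ∫ ξ, ∫ s, 𝐞 (-minkowskiForm E (coneMap (s, ξ)) p) • 𝓕 f ξ ∂gaussianReal 0 1 := by
        simp only [integral_fourierChar_minkowskiForm_coneMap]
    _ = ∫ z, 𝐞 (-minkowskiForm E (coneMap z) p) • 𝓕 f z.2 ∂(gaussianReal 0 1).prod volume :=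
        (integral_prod_symm _ hint).symm
    _ = ∫ v, 𝐞 (-minkowskiForm E v p) • 𝓕 f v.2 ∂coneMeasure E :=
        (integral_map hcone.aemeasurable hwave.aestronglyMeasurable).symm

lemma contDiff_gaussianExtension [CompleteSpace V] (f : 𝓢(E, V)) :
    ContDiff ℝ (⊤ : ℕ∞) (gaussianExtension f) := by
  rw [gaussianExtension_eq_fourierIntegral]
  exact VectorFourier.contDiff_fourierIntegral (minkowskiForm E)
    fun k _ ↦ integrable_pow_norm_mul_coneMeasure (𝓕 f) k

lemma hasDerivAt_gaussianExtension (f : 𝓢(E, V)) (t : ℝ) (x : E) :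
    HasDerivAt (fun r ↦ gaussianExtension f (r, x))
      (fourierMultiplierCLM V (gaussianSymbolDeriv t) f x) t := by
  refine hasDerivAt_fourierMultiplierCLM_apply (Metric.ball_mem_nhds t one_pos)
    hasTemperateGrowth_gaussianSymbol (hasTemperateGrowth_gaussianSymbolDeriv t)
    (bound := fun ξ ↦ 4 * π ^ 2 * (|t| + 1) * ‖ξ‖ ^ 2)
    (fun ξ r _ ↦ hasDerivAt_gaussianSymbol r ξ)
    (fun ξ r hr ↦ norm_gaussianSymbolDeriv_le ?_ ξ) ?_ x
  · rw [Metric.mem_ball, Real.dist_eq] at hr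
    linarith [abs_sub_abs_le_abs_sub r t]
  · simp only [mul_assoc _ (‖_‖ ^ 2)]
    exact ((𝓕 f).integrable_pow_mul volume 2).const_mul _

variable [CompleteSpace V]

lemma fderiv_gaussianExtension_time (f : 𝓢(E, V)) (t : ℝ) (x : E) :
    fderiv ℝ (gaussianExtension f) (t, x) (1, 0) =
      fourierMultiplierCLM V (gaussianSymbolDeriv t) f x := by
  have hu := (contDiff_gaussianExtension f).differentiable (by simp) (t, x)
  have hline : HasDerivAt (fun r : ℝ ↦ (r, x)) (1, 0) t :=
    (hasDerivAt_id t).prodMk (hasDerivAt_const t x)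
  have hcomp : HasDerivAt (fun r ↦ gaussianExtension f (r, x))
      (fderiv ℝ (gaussianExtension f) (t, x) (1, 0)) t :=
    HasFDerivAt.comp_hasDerivAt (l := gaussianExtension f) (f := fun r ↦ (r, x)) t
      hu.hasFDerivAt hline
  exact hcomp.unique (hasDerivAt_gaussianExtension f t x)

lemma fderiv_gaussianExtension_space (f : 𝓢(E, V)) (t : ℝ) (x v : E) :
    fderiv ℝ (gaussianExtension f) (t, x) (0, v) =
      fderiv ℝ (fourierMultiplierCLM V (gaussianSymbol t) f) x v := by
  have hu := (contDiff_gaussianExtension f).differentiable (by simp) (t, x)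
  exact (DFunLike.congr_fun (hu.hasFDerivAt.comp x (hasFDerivAt_prodMk_right t x)).fderiv v).symm

lemma measurable_enorm_sq_fderiv_gaussianExtension (f : 𝓢(E, V)) (v : ℝ × E) :
    Measurable fun p ↦ ‖fderiv ℝ (gaussianExtension f) p v‖ₑ ^ 2 := by
  have hcont : Continuous fun p ↦ fderiv ℝ (gaussianExtension f) p v :=
    ((contDiff_gaussianExtension f).continuous_fderiv (by simp)).clm_apply continuous_const
  exact hcont.enorm.measurable.pow_const 2

end NormedSpace

variable [FiniteDimensional ℝ E] [MeasurableSpace E] [BorelSpace E] [NormedAddCommGroup H]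
  [InnerProductSpace ℂ H] [CompleteSpace H] [Fintype ι]

lemma lintegral_slice_energy_gaussianExtension (b : OrthonormalBasis ι ℝ E) (f : 𝓢(E, H)) (t : ℝ) :
    ∫⁻ x, (‖fderiv ℝ (gaussianExtension f) (t, x) (1, 0)‖ₑ ^ 2 +
        ∑ j, ‖fderiv ℝ (gaussianExtension f) (t, x) (0, b j)‖ₑ ^ 2) =
      ∫⁻ ξ, ENNReal.ofReal ((2 * π * ‖ξ‖) ^ 2 * ((1 + (2 * π * ‖ξ‖ * t) ^ 2) *
        exp (-(2 * π * ‖ξ‖ * t) ^ 2))) * ‖𝓕 f ξ‖ₑ ^ 2 := by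
  have hmeas (v : ℝ × E) :
      Measurable fun x ↦ ‖fderiv ℝ (gaussianExtension f) (t, x) v‖ₑ ^ 2 :=
    (measurable_enorm_sq_fderiv_gaussianExtension f v).comp measurable_prodMk_left
  have hf : Measurable fun ξ ↦ ‖𝓕 f ξ‖ₑ ^ 2 := (𝓕 f).continuous.enorm.measurable.pow_const 2
  have hsymbol : Measurable fun ξ ↦ ‖gaussianSymbolDeriv t ξ‖ₑ ^ 2 * ‖𝓕 f ξ‖ₑ ^ 2 :=
    ((hasTemperateGrowth_gaussianSymbolDeriv t).1.continuous.enorm.measurable.pow_const 2).mul hf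
  rw [lintegral_add_left (hmeas _), lintegral_finsetSum _ fun j _ ↦ hmeas _]
  simp only [fderiv_gaussianExtension_time, fderiv_gaussianExtension_space]
  rw [lintegral_enorm_sq_fourierMultiplierCLM (hasTemperateGrowth_gaussianSymbolDeriv t),
    sum_lintegral_enorm_sq_fderiv, ← lintegral_add_left hsymbol]
  simp only [fourier_fourierMultiplierCLM_apply (hasTemperateGrowth_gaussianSymbol t), enorm_smul,
    mul_pow (‖_‖ₑ), ← mul_assoc (ENNReal.ofReal _), ← add_mul, enorm_sq_gaussianSymbolDeriv_add]

lemma lintegral_energy_gaussianExtension (b : OrthonormalBasis ι ℝ E) (f : 𝓢(E, H)) :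
    ∫⁻ p in Ioi (0 : ℝ) ×ˢ (univ : Set E), (‖fderiv ℝ (gaussianExtension f) p (1, 0)‖ₑ ^ 2 +
        ∑ j, ‖fderiv ℝ (gaussianExtension f) p (0, b j)‖ₑ ^ 2) =
      ENNReal.ofReal (3 / 2 * π * √π) * ∫⁻ ξ, ‖ξ‖ₑ * ‖𝓕 f ξ‖ₑ ^ 2 := by
  have hmeas := measurable_enorm_sq_fderiv_gaussianExtension f
  have hf : Measurable fun ξ ↦ ‖𝓕 f ξ‖ₑ ^ 2 := (𝓕 f).continuous.enorm.measurable.pow_const 2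
  have hmeasSum : Measurable fun p ↦ ‖fderiv ℝ (gaussianExtension f) p (1, 0)‖ₑ ^ 2 +
      ∑ j, ‖fderiv ℝ (gaussianExtension f) p (0, b j)‖ₑ ^ 2 :=
    (hmeas _).add (Finset.measurable_fun_sum _ fun j _ ↦ hmeas _)
  have hmeasSymbol : Measurable fun p : ℝ × E ↦ ENNReal.ofReal ((2 * π * ‖p.2‖) ^ 2 *
      ((1 + (2 * π * ‖p.2‖ * p.1) ^ 2) * exp (-(2 * π * ‖p.2‖ * p.1) ^ 2))) * ‖𝓕 f p.2‖ₑ ^ 2 :=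
    .mul (by fun_prop) (hf.comp measurable_snd)
  rw [Measure.volume_eq_prod, ← Measure.prod_restrict, Measure.restrict_univ,
    lintegral_prod _ hmeasSum.aemeasurable]
  simp only [lintegral_slice_energy_gaussianExtension]
  rw [lintegral_lintegral_swap hmeasSymbol.aemeasurable,
    ← lintegral_const_mul' _ _ ENNReal.ofReal_ne_top]
  refine lintegral_congr fun ξ ↦ ?_
  rw [lintegral_mul_const _ (by fun_prop),
    lintegral_Ioi_sq_mul_one_add_sq_mul_exp_neg_sq (by positivity), ← ofReal_norm ξ,
    ← mul_assoc (ENNReal.ofReal _), ← ENNReal.ofReal_mul (by positivity)]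
  ring_nf

theorem stmt13_general (b : OrthonormalBasis ι ℝ E) (f : 𝓢(E, H)) :
    ∃ u : ℝ × E → H, ContDiff ℝ (⊤ : ℕ∞) u ∧ (∀ x, u (0, x) = f x) ∧
      ∫⁻ p in Ioi (0 : ℝ) ×ˢ (univ : Set E),
          (‖fderiv ℝ u p (1, 0)‖ₑ ^ 2 + ∑ j, ‖fderiv ℝ u p (0, b j)‖ₑ ^ 2) =
        ENNReal.ofReal (3 / 2 * π * √π) * ∫⁻ ξ, ‖ξ‖ₑ * ‖𝓕 f ξ‖ₑ ^ 2 :=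
  ⟨gaussianExtension f, contDiff_gaussianExtension f, gaussianExtension_zero f,
    lintegral_energy_gaussianExtension b f⟩

end GaussianExtension

end

/- STATEMENT 13: the trace map from `Ḣ¹(ℝ^{1+n}_+)` to `Ḣ^{1/2}(ℝⁿ)` is
onto: there is `C > 0` (depending only on `n`) such that every Schwartz
function `f` on `ℝⁿ = EuclideanSpace ℝ (Fin n)` admits an extension
`u : [0,∞) × ℝⁿ → ℂ`, continuous on `[0,∞) × ℝⁿ` and smooth on
`(0,∞) × ℝⁿ`, with `u(0,·) = f` and
`∫₀^∞ ∫_{ℝⁿ} |∇_{t,x}u|² dx dt ≤ C ∫ ‖ξ‖ |f̂(ξ)|² dξ`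
(`𝓕` is the Fourier transform with convention `f̂(ξ) = ∫ f(x) e^{-2πi x·ξ} dx`;
`|∇_{t,x}u|² = |∂ₜu|² + Σⱼ |∂ⱼu|²`). -/
theorem stmt13 {n : ℕ} (hn : 1 ≤ n) :
    ∃ C : ℝ, 0 < C ∧
      ∀ f : 𝓢(EuclideanSpace ℝ (Fin n), ℂ),
        ∃ u : ℝ × EuclideanSpace ℝ (Fin n) → ℂ,
          ContinuousOn u
            (Set.Ici (0 : ℝ) ×ˢ (Set.univ : Set (EuclideanSpace ℝ (Fin n)))) ∧
          ContDiffOn ℝ (⊤ : ℕ∞) u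
            (Set.Ioi (0 : ℝ) ×ˢ (Set.univ : Set (EuclideanSpace ℝ (Fin n)))) ∧
          (∀ x, u (0, x) = f x) ∧
          (∫⁻ p in Set.Ioi (0 : ℝ) ×ˢ (Set.univ : Set (EuclideanSpace ℝ (Fin n))),
              ((‖fderiv ℝ u p (1, 0)‖₊ : ℝ≥0∞) ^ 2 +
                ∑ j, (‖fderiv ℝ u p (0, EuclideanSpace.single j 1)‖₊ : ℝ≥0∞) ^ 2)) ≤
            ENNReal.ofReal C *
              ∫⁻ ξ : EuclideanSpace ℝ (Fin n),
                (‖ξ‖₊ : ℝ≥0∞) * (‖𝓕 (⇑f) ξ‖₊ : ℝ≥0∞) ^ 2 := by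
  refine ⟨3 / 2 * Real.pi * √Real.pi, by positivity, fun f ↦ ?_⟩
  obtain ⟨u, hu, hu0, henergy⟩ := stmt13_general (EuclideanSpace.basisFun (Fin n) ℝ) f
  simp only [EuclideanSpace.basisFun_apply] at henergy
  exact ⟨u, hu.continuous.continuousOn, hu.contDiffOn, hu0, henergy.le⟩
end
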